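/- Let n ≥ 1 be an integer, 0 ≤ k ≤ n, 0 < p < 1, q = 1 − p. Then |∂/∂p F_{n,p}(k) − ∂/∂p G_{n,p}(k)| ≤ (1/(pq)) · (c₁/p + c₂), where c₁ = 0.516 and c₂ = 0.121; here ∂/∂p F_{n,p}(k) is the derivative in p of p ↦ Σ_{i=0}^{k−1} C(n,i) p^i q^{n−i}, which equals −n C(n−1,k−1) p^{k−1} q^{n−k}, and ∂/∂p G_{n,p}(k) is the derivative in p of p ↦ Φ((k − np)/√(npq)). -/

import Mathlib

/-- The standard normal distribution function Φ. -/
noncomputable def Phi (x : ℝ) : ℝ :=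
  (Real.sqrt (2 * Real.pi))⁻¹ * ∫ t in Set.Iio x, Real.exp (-t ^ 2 / 2)

open MeasureTheory

/-- The characteristic function of a centered Bernoulli variable with parameter `p`. -/
noncomputable def bernoulliCharFun (p t : ℝ) : ℂ :=
  Complex.exp (Complex.I * ((-p * t : ℝ) : ℂ)) * ((1 - p : ℝ) + p * Complex.exp (Complex.I * t))

theorem norm_exp_I_mul_sub_one_sub_le {y : ℝ} (hy : 0 ≤ y) :
    ‖Complex.exp (Complex.I * y) - 1 - Complex.I * y‖ ≤ y ^ 2 / 2 := by
  have hd : ∀ x : ℝ, HasDerivAt (fun x : ℝ => Complex.exp (Complex.I * x) - 1 - Complex.I * x)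
      (Complex.I * (Complex.exp (Complex.I * x) - 1)) x := by
    intro x
    have h1 : HasDerivAt (fun x : ℝ => Complex.I * (x : ℂ)) Complex.I x := by
      simpa using (Complex.ofRealCLM.hasDerivAt (x := x)).const_mul Complex.I
    exact ((h1.cexp.sub_const 1).sub h1).congr_deriv (by ring)
  have hB : ∀ x : ℝ, HasDerivAt (fun x : ℝ => x ^ 2 / 2) x x := by
    intro x
    exact ((hasDerivAt_pow 2 x).div_const 2).congr_deriv (by norm_num)
  refine image_norm_le_of_norm_deriv_right_le_deriv_boundary (a := 0) (b := y)
    (B := fun x : ℝ => x ^ 2 / 2) (B' := fun x => x)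
    (fun x _ => (hd x).continuousAt.continuousWithinAt)
    (fun x _ => (hd x).hasDerivWithinAt) (by simp) hB (fun x hx => ?_) ⟨hy, le_rfl⟩
  have := Real.norm_exp_I_mul_ofReal_sub_one_le (x := x)
  rw [norm_mul, Complex.norm_I, one_mul]
  rwa [Real.norm_of_nonneg hx.1] at this

theorem norm_bernoulliCharFun_le {p t : ℝ} (hp : p ∈ Set.Icc (0 : ℝ) 1) (ht : |t| ≤ Real.pi) :
    ‖bernoulliCharFun p t‖ ≤ Real.exp (-(p * (1 - p) / 5 * t ^ 2)) := by
  have hw : 0 ≤ p * (1 - p) := mul_nonneg hp.1 (by linarith [hp.2])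
  have hsq : ‖bernoulliCharFun p t‖ ^ 2 = 1 - 2 * (p * (1 - p)) * (1 - Real.cos t) := by
    rw [bernoulliCharFun, norm_mul, Complex.norm_exp_I_mul_ofReal, one_mul, mul_comm Complex.I,
      Complex.exp_mul_I, ← Complex.ofReal_cos, ← Complex.ofReal_sin, Complex.sq_norm,
      Complex.normSq_apply]
    simp only [Complex.add_re, Complex.add_im, Complex.mul_re, Complex.mul_im, Complex.ofReal_re,
      Complex.ofReal_im, Complex.I_re, Complex.I_im]
    linear_combination p ^ 2 * Real.sin_sq_add_cos_sq t
  have hcos : Real.cos t ≤ 1 - t ^ 2 / 5 := by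
    refine (Real.cos_le_one_sub_mul_cos_sq ht).trans ?_
    have hpi : Real.pi ^ 2 ≤ 10 := by nlinarith [Real.pi_lt_d2, Real.pi_pos]
    have : 1 / 5 ≤ 2 / Real.pi ^ 2 := by
      rw [div_le_div_iff₀ (by norm_num) (by positivity)]
      linarith
    nlinarith [mul_le_mul_of_nonneg_right this (sq_nonneg t)]
  refine (sq_le_sq₀ (norm_nonneg _) (Real.exp_pos _).le).1 ?_
  rw [hsq, ← Real.exp_nat_mul]
  refine le_trans ?_ (Real.add_one_le_exp _)
  push_cast
  nlinarith [mul_le_mul_of_nonneg_left hcos hw]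

theorem hasDerivAt_bernoulliCharFun (p t : ℝ) :
    HasDerivAt (bernoulliCharFun p)
      (Complex.I * (p * (1 - p)) * Complex.exp (Complex.I * ((-p * t : ℝ) : ℂ)) *
        (Complex.exp (Complex.I * t) - 1)) t := by
  have h1 : HasDerivAt (fun x : ℝ => Complex.I * (x : ℂ)) Complex.I t := by
    simpa using (Complex.ofRealCLM.hasDerivAt (x := t)).const_mul Complex.I
  have h2 : HasDerivAt (fun x : ℝ => Complex.I * ((-p * x : ℝ) : ℂ)) (-p * Complex.I) t := by
    refine (h1.const_mul (-p : ℂ)).congr_of_eventuallyEq (.of_forall fun x => ?_)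
    push_cast
    ring
  refine (h2.cexp.mul
    ((h1.cexp.const_mul (p : ℂ)).const_add ((1 - p : ℝ) : ℂ))).congr_deriv ?_
  push_cast
  ring

theorem norm_bernoulliCharFun_remainder_le {p t : ℝ} (hp : p ∈ Set.Icc (0 : ℝ) 1) (ht : 0 ≤ t) :
    ‖Complex.I * (Complex.exp (Complex.I * t) - 1) +
        t * ((1 - p : ℝ) + p * Complex.exp (Complex.I * t))‖ ≤
      (p ^ 2 + (1 - p) ^ 2) * t ^ 2 / 2 := by
  have hq : 0 ≤ 1 - p := by linarith [hp.2]
  set E := Complex.exp (Complex.I * t)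
  set A := Complex.exp (Complex.I * (((1 - p) * t : ℝ) : ℂ))
  set B := Complex.exp (Complex.I * ((p * t : ℝ) : ℂ))
  have hE : E = A * B := by
    simp only [E, A, B]
    rw [← Complex.exp_add]
    congr 1
    push_cast
    ring
  have hB : ‖(starRingEnd ℂ) B - 1 + Complex.I * ((p * t : ℝ) : ℂ)‖ ≤ (p * t) ^ 2 / 2 := by
    rw [← Complex.norm_conj]
    convert norm_exp_I_mul_sub_one_sub_le (mul_nonneg hp.1 ht) using 2
    simp [B]
    ring
  have hA := norm_exp_I_mul_sub_one_sub_le (mul_nonneg hq ht)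
  have hBB : B * (starRingEnd ℂ) B = 1 := by
    rw [Complex.mul_conj, Complex.normSq_eq_norm_sq, Complex.norm_exp_I_mul_ofReal]
    simp
  have key : Complex.I * (E - 1) + t * ((1 - p : ℝ) + p * E) =
      Complex.I * (A - 1 - Complex.I * (((1 - p) * t : ℝ) : ℂ)) -
      Complex.I * E * ((starRingEnd ℂ) B - 1 + Complex.I * ((p * t : ℝ) : ℂ)) := by
    have h1 : E * (starRingEnd ℂ) B = A := by rw [hE, mul_assoc, hBB, mul_one]
    push_cast
    linear_combination ((1 - p) * t + E * p * t) * Complex.I_sq + Complex.I * h1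
  rw [key]
  refine (norm_sub_le _ _).trans ?_
  rw [norm_mul, norm_mul, norm_mul, Complex.norm_I, Complex.norm_exp_I_mul_ofReal]
  simp only [one_mul]
  nlinarith [hA, hB]

theorem norm_bernoulliCharFun_sub_exp_le {p t : ℝ} (hp : p ∈ Set.Icc (0 : ℝ) 1) :
    ‖bernoulliCharFun p t - Real.exp (-(p * (1 - p) / 2 * t ^ 2))‖ ≤
      p * (1 - p) * (p ^ 2 + (1 - p) ^ 2) / 6 * |t| ^ 3 := by
  have hw : 0 ≤ p * (1 - p) := mul_nonneg hp.1 (by linarith [hp.2])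
  wlog ht : 0 ≤ t generalizing t
  · have h := this (t := -t) (by linarith)
    rw [← Complex.norm_conj, abs_neg] at h
    convert h using 2
    simp [bernoulliCharFun, ← Complex.exp_conj, Complex.conj_ofNat]
  set w := p * (1 - p)
  have hv : ∀ x : ℝ, HasDerivAt (fun x : ℝ => Real.exp (w / 2 * x ^ 2))
      (w * x * Real.exp (w / 2 * x ^ 2)) x := by
    intro x
    refine ((hasDerivAt_pow 2 x).const_mul (w / 2)).exp.congr_deriv ?_
    push_cast
    ring
  have hd : ∀ x : ℝ, HasDerivAt
      (fun x : ℝ => bernoulliCharFun p x * (Real.exp (w / 2 * x ^ 2) : ℂ) - 1)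
      (w * Complex.exp (Complex.I * ((-p * x : ℝ) : ℂ)) * Real.exp (w / 2 * x ^ 2) *
        (Complex.I * (Complex.exp (Complex.I * x) - 1) +
        x * ((1 - p : ℝ) + p * Complex.exp (Complex.I * x)))) x := by
    intro x
    refine (((hasDerivAt_bernoulliCharFun p x).mul
      (hv x).ofReal_comp).sub_const 1).congr_deriv ?_
    simp only [bernoulliCharFun, w]
    push_cast
    ring
  have hB : ∀ x : ℝ, HasDerivAt
      (fun x : ℝ => w * (p ^ 2 + (1 - p) ^ 2) / 6 * x ^ 3 * Real.exp (w / 2 * x ^ 2))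
      (w * (p ^ 2 + (1 - p) ^ 2) / 2 * x ^ 2 * Real.exp (w / 2 * x ^ 2) +
        w * (p ^ 2 + (1 - p) ^ 2) / 6 * x ^ 3 * (w * x * Real.exp (w / 2 * x ^ 2))) x := by
    intro x
    refine (((hasDerivAt_pow 3 x).const_mul
      (w * (p ^ 2 + (1 - p) ^ 2) / 6)).mul (hv x)).congr_deriv ?_
    push_cast
    ring
  have key := image_norm_le_of_norm_deriv_right_le_deriv_boundary (a := 0) (b := t)
    (fun x _ => (hd x).continuousAt.continuousWithinAt)
    (fun x _ => (hd x).hasDerivWithinAt) (by simp [bernoulliCharFun]) hB (fun x hx => ?_)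
    ⟨ht, le_rfl⟩
  · have he : Real.exp (-(w / 2 * t ^ 2)) * Real.exp (w / 2 * t ^ 2) = 1 := by
      rw [← Real.exp_add]
      simp
    have heC : (Real.exp (-(w / 2 * t ^ 2)) : ℂ) * (Real.exp (w / 2 * t ^ 2) : ℂ) = 1 := by
      exact_mod_cast he
    have hfac : bernoulliCharFun p t - Real.exp (-(w / 2 * t ^ 2)) =
        (Real.exp (-(w / 2 * t ^ 2)) : ℂ) *
          (bernoulliCharFun p t * (Real.exp (w / 2 * t ^ 2) : ℂ) - 1) := by
      linear_combination (-bernoulliCharFun p t) * heC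
    rw [hfac, norm_mul, Complex.norm_real, Real.norm_of_nonneg (Real.exp_pos _).le,
      abs_of_nonneg ht]
    refine (mul_le_mul_of_nonneg_left key (Real.exp_pos _).le).trans_eq ?_
    linear_combination (w * (p ^ 2 + (1 - p) ^ 2) / 6 * t ^ 3) * he
  · have hx0 : 0 ≤ x := hx.1
    have h := norm_bernoulliCharFun_remainder_le hp hx0
    rw [norm_mul, norm_mul, norm_mul, Complex.norm_exp_I_mul_ofReal, Complex.norm_real,
      Complex.norm_real, Real.norm_of_nonneg (Real.exp_pos _).le, Real.norm_of_nonneg hw, mul_one]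
    have h2 := mul_le_mul_of_nonneg_left h (mul_nonneg hw (Real.exp_pos (w / 2 * x ^ 2)).le)
    have h3 : 0 ≤ w * (p ^ 2 + (1 - p) ^ 2) / 6 * x ^ 3 * (w * x * Real.exp (w / 2 * x ^ 2)) := by
      positivity
    linarith

theorem norm_pow_sub_pow_le (a b : ℂ) (m : ℕ) :
    ‖a ^ m - b ^ m‖ ≤ (∑ j ∈ Finset.range m, ‖a‖ ^ j * ‖b‖ ^ (m - 1 - j)) * ‖a - b‖ := by
  rw [← geom_sum₂_mul, norm_mul]
  gcongr
  refine (norm_sum_le _ _).trans_eq ?_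
  simp

theorem integrable_abs_pow_mul_exp_neg_mul_sq {c : ℝ} (hc : 0 < c) (k : ℕ) :
    Integrable fun t : ℝ => |t| ^ k * Real.exp (-(c * t ^ 2)) := by
  have h := (integrable_rpow_mul_exp_neg_mul_sq hc (s := k)
    (by have := k.cast_nonneg (α := ℝ); linarith)).norm
  refine h.congr (.of_forall fun t => ?_)
  simp

theorem integral_abs_pow_mul_exp_neg_mul_sq {c : ℝ} (hc : 0 < c) (j : ℕ) :
    ∫ t : ℝ, |t| ^ (2 * j + 1) * Real.exp (-(c * t ^ 2)) = j.factorial / c ^ (j + 1) := by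
  have h := integral_comp_abs (f := fun t : ℝ => t ^ (2 * j + 1) * Real.exp (-(c * t ^ 2)))
  simp only [sq_abs] at h
  have hG := integral_rpow_mul_exp_neg_mul_rpow (p := 2) (q := (2 * j + 1 : ℕ)) (b := c) two_pos
    (by have := (2 * j + 1).cast_nonneg (α := ℝ); linarith) hc
  have h1 : (((2 * j + 1 : ℕ) : ℝ) + 1) / 2 = j + 1 := by push_cast; ring
  have h2 : -(((2 * j + 1 : ℕ) : ℝ) + 1) / 2 = -((j + 1 : ℕ) : ℝ) := by push_cast; ring
  rw [h1, h2, Real.Gamma_nat_eq_factorial, Real.rpow_neg hc.le, Real.rpow_natCast] at hG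
  simp only [Real.rpow_natCast, Real.rpow_two, neg_mul] at hG
  rw [h, hG]
  ring

theorem integral_exp_int_mul_I (l : ℤ) :
    ∫ t in (-Real.pi)..Real.pi, Complex.exp (Complex.I * l * t) =
      if l = 0 then 2 * (Real.pi : ℂ) else 0 := by
  split_ifs with hl
  · simp [hl]
    ring
  · have hc : Complex.I * l ≠ 0 := mul_ne_zero Complex.I_ne_zero (by exact_mod_cast hl)
    rw [integral_exp_mul_complex hc, div_eq_zero_iff, sub_eq_zero]
    left
    rw [Complex.exp_eq_exp_iff_exists_int]
    exact ⟨l, by push_cast; ring⟩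

theorem integral_exp_mul_binomial_pow (a b : ℂ) {m j : ℕ} (hj : j ≤ m) :
    ∫ t in (-Real.pi)..Real.pi, Complex.exp (Complex.I * ((-(j * t) : ℝ) : ℂ)) *
      (a + b * Complex.exp (Complex.I * t)) ^ m =
      2 * Real.pi * (m.choose j * b ^ j * a ^ (m - j)) := by
  have hexp : ∀ t : ℝ, Complex.exp (Complex.I * ((-(j * t) : ℝ) : ℂ)) *
      (a + b * Complex.exp (Complex.I * t)) ^ m = ∑ i ∈ Finset.range (m + 1),
        (m.choose i * b ^ i * a ^ (m - i)) *
          Complex.exp (Complex.I * ((i - j : ℤ) : ℂ) * t) := by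
    intro t
    rw [add_comm a, add_pow, Finset.mul_sum]
    refine Finset.sum_congr rfl fun i _ => ?_
    have : Complex.exp (Complex.I * ((i - j : ℤ) : ℂ) * t) =
        Complex.exp (Complex.I * ((-(j * t) : ℝ) : ℂ)) * Complex.exp (Complex.I * t) ^ i := by
      rw [← Complex.exp_nat_mul, ← Complex.exp_add]
      congr 1
      push_cast
      ring
    rw [this, mul_pow]
    ring
  simp_rw [hexp]
  rw [intervalIntegral.integral_finsetSum fun i _ =>
    Continuous.intervalIntegrable (by fun_prop) _ _]
  simp_rw [intervalIntegral.integral_const_mul, integral_exp_int_mul_I]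
  rw [Finset.sum_eq_single_of_mem j (by simp; omega)]
  · simp
    ring
  · intro i _ hij
    rw [if_neg (by omega), mul_zero]

theorem integral_exp_mul_gaussian {s : ℝ} (hs : 0 < s) (y : ℝ) :
    ∫ t : ℝ, Complex.exp (Complex.I * ((-(y * t) : ℝ) : ℂ)) *
        (Real.exp (-(s / 2 * t ^ 2)) : ℂ) =
      (Real.sqrt (2 * Real.pi / s) * Real.exp (-(y ^ 2 / (2 * s))) : ℝ) := by
  have h := fourierIntegral_gaussian (b := ((s / 2 : ℝ) : ℂ))
    (by rw [Complex.ofReal_re]; positivity) (-y : ℂ)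
  have hL : ∀ t : ℝ, Complex.exp (Complex.I * ((-(y * t) : ℝ) : ℂ)) *
        (Real.exp (-(s / 2 * t ^ 2)) : ℂ) =
      Complex.exp (Complex.I * (-y : ℂ) * t) * Complex.exp (-((s / 2 : ℝ) : ℂ) * t ^ 2) := by
    intro t
    push_cast
    congr 2 <;> ring
  simp_rw [hL]
  rw [h, Real.sqrt_eq_rpow, Complex.ofReal_mul, Complex.ofReal_cpow (by positivity)]
  congr 1
  · push_cast
    congr 1
    field_simp
  · push_cast
    congr 1
    field_simp
    ring

theorem exp_mul_binomial_eq (p t : ℝ) (m j : ℕ) :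
    Complex.exp (Complex.I * ((-(j * t) : ℝ) : ℂ)) *
        (((1 - p : ℝ) : ℂ) + p * Complex.exp (Complex.I * t)) ^ m =
      Complex.exp (Complex.I * ((-(((j : ℝ) + 1 - (m + 1) * p) * t) : ℝ) : ℂ)) *
        (Complex.exp (Complex.I * (((1 - p) * t : ℝ) : ℂ)) * bernoulliCharFun p t ^ m) := by
  rw [bernoulliCharFun, mul_pow, ← Complex.exp_nat_mul, ← mul_assoc, ← mul_assoc,
    ← Complex.exp_add, ← Complex.exp_add]
  congr 2
  push_cast
  ring

theorem integral_bernoulliCharFun_pow (p : ℝ) {m j : ℕ} (hj : j ≤ m) :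
    ∫ t in (-Real.pi)..Real.pi,
        Complex.exp (Complex.I * ((-(((j : ℝ) + 1 - (m + 1) * p) * t) : ℝ) : ℂ)) *
          (Complex.exp (Complex.I * (((1 - p) * t : ℝ) : ℂ)) * bernoulliCharFun p t ^ m) =
      ((2 * Real.pi * (m.choose j * p ^ j * (1 - p) ^ (m - j)) : ℝ) : ℂ) := by
  simp_rw [← exp_mul_binomial_eq]
  rw [integral_exp_mul_binomial_pow _ _ hj]
  push_cast
  ring

theorem norm_bernoulliCharFun_pow_le {p t : ℝ} (hp : p ∈ Set.Icc (0 : ℝ) 1)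
    (ht : |t| ≤ Real.pi) (m : ℕ) :
    ‖bernoulliCharFun p t‖ ^ m ≤ Real.exp (-(m * (p * (1 - p) / 5) * t ^ 2)) := by
  refine (pow_le_pow_left₀ (norm_nonneg _) (norm_bernoulliCharFun_le hp ht) m).trans_eq ?_
  rw [← Real.exp_nat_mul]
  congr 1
  ring

theorem continuous_bernoulliCharFun (p : ℝ) : Continuous (bernoulliCharFun p) :=
  continuous_iff_continuousAt.2 fun t => (hasDerivAt_bernoulliCharFun p t).continuousAt

theorem two_pi_mul_binomial_le {p : ℝ} (hp : p ∈ Set.Ioo (0 : ℝ) 1) {m j : ℕ} (hm : 1 ≤ m)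
    (hj : j ≤ m) :
    2 * Real.pi * (m.choose j * p ^ j * (1 - p) ^ (m - j)) ≤
      Real.sqrt (Real.pi / (m * (p * (1 - p) / 5))) := by
  have hp' : p ∈ Set.Icc (0 : ℝ) 1 := Set.Ioo_subset_Icc_self hp
  have hw : 0 < p * (1 - p) := mul_pos hp.1 (by linarith [hp.2])
  have hm' : (0 : ℝ) < m := by exact_mod_cast hm
  set c := m * (p * (1 - p) / 5)
  have hc : 0 < c := by positivity
  have hI : Integrable fun t : ℝ => Real.exp (-(c * t ^ 2)) := by
    simpa using integrable_abs_pow_mul_exp_neg_mul_sq hc 0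
  have hpi := Real.pi_pos
  have h := congrArg norm (integral_bernoulliCharFun_pow p hj)
  rw [Complex.norm_real] at h
  refine (le_abs_self _).trans (h.symm.le.trans ?_)
  have hG := integral_gaussian c
  simp only [neg_mul] at hG
  rw [← hG, ← setIntegral_univ (f := fun t : ℝ => Real.exp (-(c * t ^ 2)))]
  refine (intervalIntegral.norm_integral_le_of_norm_le (by linarith)
    (g := fun t : ℝ => Real.exp (-(c * t ^ 2))) (.of_forall fun t ht => ?_)
    hI.intervalIntegrable).trans ?_
  · rw [norm_mul, norm_mul, Complex.norm_exp_I_mul_ofReal, Complex.norm_exp_I_mul_ofReal,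
      one_mul, one_mul, norm_pow]
    exact norm_bernoulliCharFun_pow_le hp' (abs_le.2 ⟨ht.1.le, ht.2⟩) m
  · rw [intervalIntegral.integral_of_le (by linarith)]
    exact setIntegral_mono_set hI.integrableOn (.of_forall fun t => (Real.exp_pos _).le)
      (Set.subset_univ _).eventuallyLE

theorem norm_exp_I_mul_sub_exp_neg_le {q w t : ℝ} (hq : 0 ≤ q) (hw : 0 ≤ w) :
    ‖Complex.exp (Complex.I * ((q * t : ℝ) : ℂ)) - (Real.exp (-(w / 2 * t ^ 2)) : ℂ)‖ ≤
      (q + w / 2) * |t| + w / 8 * |t| ^ 3 := by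
  have h1 := Real.norm_exp_I_mul_ofReal_sub_one_le (x := q * t)
  rw [Real.norm_eq_abs, abs_mul, abs_of_nonneg hq] at h1
  have h2 : ‖(1 : ℂ) - (Real.exp (-(w / 2 * t ^ 2)) : ℂ)‖ ≤ w / 2 * t ^ 2 := by
    rw [← Complex.ofReal_one, ← Complex.ofReal_sub, Complex.norm_real, Real.norm_eq_abs,
      abs_of_nonneg]
    · linarith [Real.add_one_le_exp (-(w / 2 * t ^ 2))]
    · rw [sub_nonneg, Real.exp_le_one_iff]
      have : 0 ≤ w / 2 * t ^ 2 := by positivity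
      linarith
  have h3 : t ^ 2 ≤ |t| + |t| ^ 3 / 4 := by
    rw [← sq_abs]
    nlinarith [mul_nonneg (abs_nonneg t) (sq_nonneg (|t| - 2))]
  have h4 := norm_sub_le_norm_sub_add_norm_sub (Complex.exp (Complex.I * ((q * t : ℝ) : ℂ))) 1
    (Real.exp (-(w / 2 * t ^ 2)) : ℂ)
  nlinarith [mul_le_mul_of_nonneg_left h3 hw]

/-- An integrable majorant for the distance between the characteristic function of a shifted
binomial variable with `m + 1` trials, restricted to `[-π, π]`, and its Gaussian approximation. -/
noncomputable def charFunErrorBound (p : ℝ) (m : ℕ) (t : ℝ) : ℝ :=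
  p * (1 - p) * (p ^ 2 + (1 - p) ^ 2) / 6 *
      ∑ i ∈ Finset.range m,
        |t| ^ 3 * Real.exp (-((i * (p * (1 - p) / 5) +
          ((m - 1 - i : ℕ) : ℝ) * (p * (1 - p) / 2)) * t ^ 2)) +
    ((1 - p + p * (1 - p) / 2) * (|t| ^ 1 * Real.exp (-(m * (p * (1 - p) / 2) * t ^ 2))) +
      p * (1 - p) / 8 * (|t| ^ 3 * Real.exp (-(m * (p * (1 - p) / 2) * t ^ 2)))) +
    1 / 30 * (|t| ^ 3 * Real.exp (-((m + 1) * (p * (1 - p) / 2) * t ^ 2)))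

theorem norm_charFun_sub_gaussian_le {p t : ℝ} (hp : p ∈ Set.Icc (0 : ℝ) 1) (m : ℕ) :
    ‖(Set.Ioc (-Real.pi) Real.pi).indicator (fun t : ℝ =>
          Complex.exp (Complex.I * (((1 - p) * t : ℝ) : ℂ)) * bernoulliCharFun p t ^ m) t -
        (Real.exp (-((m + 1) * (p * (1 - p) / 2) * t ^ 2)) : ℂ)‖ ≤
      charFunErrorBound p m t := by
  have hq : 0 ≤ 1 - p := by linarith [hp.2]
  have hw : 0 ≤ p * (1 - p) := mul_nonneg hp.1 hq
  rw [charFunErrorBound]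
  have hp0 := hp.1
  set w := p * (1 - p)
  set g : ℂ := (Real.exp (-(w / 2 * t ^ 2)) : ℂ) with hg
  have hgm : ∀ i : ℕ, g ^ i = (Real.exp (-(i * (w / 2) * t ^ 2)) : ℂ) := by
    intro i
    rw [hg, ← Complex.ofReal_pow, ← Real.exp_nat_mul]
    congr 2
    ring
  have hgn : ∀ i : ℕ, ‖g‖ ^ i = Real.exp (-(i * (w / 2) * t ^ 2)) := by
    intro i
    rw [← norm_pow, hgm, Complex.norm_real, Real.norm_of_nonneg (Real.exp_pos _).le]
  by_cases ht : t ∈ Set.Ioc (-Real.pi) Real.pi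
  · have ht' : |t| ≤ Real.pi := abs_le.2 ⟨ht.1.le, ht.2⟩
    rw [Set.indicator_of_mem ht]
    have hsplit : Complex.exp (Complex.I * (((1 - p) * t : ℝ) : ℂ)) * bernoulliCharFun p t ^ m -
        (Real.exp (-((m + 1) * (w / 2) * t ^ 2)) : ℂ) =
        Complex.exp (Complex.I * (((1 - p) * t : ℝ) : ℂ)) *
          (bernoulliCharFun p t ^ m - g ^ m) +
        (Complex.exp (Complex.I * (((1 - p) * t : ℝ) : ℂ)) - g) * g ^ m := by
      have := hgm (m + 1)
      push_cast at this ⊢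
      rw [← this]
      ring
    rw [hsplit]
    refine (norm_add_le _ _).trans ?_
    rw [norm_mul, norm_mul, Complex.norm_exp_I_mul_ofReal, one_mul, norm_pow g, hgn]
    have h1 := norm_pow_sub_pow_le (bernoulliCharFun p t) g m
    have h2 : (∑ i ∈ Finset.range m, ‖bernoulliCharFun p t‖ ^ i * ‖g‖ ^ (m - 1 - i)) ≤
        ∑ i ∈ Finset.range m, Real.exp (-((i * (w / 5) +
          ((m - 1 - i : ℕ) : ℝ) * (w / 2)) * t ^ 2)) := by
      refine Finset.sum_le_sum fun i _ => ?_
      rw [hgn]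
      refine (mul_le_mul_of_nonneg_right (norm_bernoulliCharFun_pow_le hp ht' i)
        (Real.exp_pos _).le).trans_eq ?_
      rw [← Real.exp_add]
      congr 1
      ring
    have h3 := norm_bernoulliCharFun_sub_exp_le (t := t) hp
    have h4 := mul_le_mul h2 h3 (norm_nonneg _)
      (Finset.sum_nonneg fun i _ => (Real.exp_pos _).le)
    have h5 := mul_le_mul_of_nonneg_right (norm_exp_I_mul_sub_exp_neg_le (t := t) hq hw)
      (Real.exp_pos (-(m * (w / 2) * t ^ 2))).le
    have h6 : 0 ≤ 1 / 30 * (|t| ^ 3 * Real.exp (-((m + 1) * (w / 2) * t ^ 2))) := by positivity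
    rw [← Finset.mul_sum]
    linarith
  · rw [Set.indicator_of_notMem ht, zero_sub, norm_neg, Complex.norm_real,
      Real.norm_of_nonneg (Real.exp_pos _).le]
    have ht' : Real.pi ≤ |t| := by
      by_contra! h
      exact ht ⟨(abs_lt.1 h).1, (abs_lt.1 h).2.le⟩
    have h30 : 30 ≤ |t| ^ 3 := by
      refine le_trans ?_ (pow_le_pow_left₀ Real.pi_pos.le ht' 3)
      refine le_trans ?_ (pow_le_pow_left₀ (by norm_num) Real.pi_gt_d2.le 3)
      norm_num
    have h6 := mul_le_mul_of_nonneg_right h30 (Real.exp_pos (-((m + 1) * (w / 2) * t ^ 2))).le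
    refine le_trans ?_ (le_add_of_nonneg_left ?_)
    · linarith
    · positivity

theorem integrable_and_integral_charFunErrorBound {p : ℝ} (hp : p ∈ Set.Ioo (0 : ℝ) 1) {m : ℕ}
    (hm : 2 ≤ m) :
    Integrable (charFunErrorBound p m) ∧
    ∫ t, charFunErrorBound p m t =
      p * (1 - p) * (p ^ 2 + (1 - p) ^ 2) / 6 *
      ∑ i ∈ Finset.range m, 1 / (i * (p * (1 - p) / 5) +
          ((m - 1 - i : ℕ) : ℝ) * (p * (1 - p) / 2)) ^ 2 +
      ((1 - p + p * (1 - p) / 2) * (1 / (m * (p * (1 - p) / 2))) +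
      p * (1 - p) / 8 * (1 / (m * (p * (1 - p) / 2)) ^ 2)) +
      1 / 30 * (1 / ((m + 1) * (p * (1 - p) / 2)) ^ 2) := by
  have hw : 0 < p * (1 - p) := mul_pos hp.1 (by linarith [hp.2])
  set w := p * (1 - p)
  have hm' : (0 : ℝ) < m := by exact_mod_cast (by omega : 0 < m)
  have hi : ∀ i ∈ Finset.range m, 0 < i * (w / 5) + ((m - 1 - i : ℕ) : ℝ) * (w / 2) := by
    intro i hi
    rcases Nat.eq_zero_or_pos i with h | h
    · have : (0 : ℝ) < (m - 1 - i : ℕ) := by exact_mod_cast (by omega : 0 < m - 1 - i)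
      positivity
    · have : (0 : ℝ) < i := by exact_mod_cast h
      positivity
  have hc1 : 0 < m * (w / 2) := by positivity
  have hc2 : 0 < ((m : ℝ) + 1) * (w / 2) := by positivity
  have I0 := fun i h => integrable_abs_pow_mul_exp_neg_mul_sq (hi i h) 3
  have I1 := integrable_abs_pow_mul_exp_neg_mul_sq hc1 1
  have I2 := integrable_abs_pow_mul_exp_neg_mul_sq hc1 3
  have I3 := integrable_abs_pow_mul_exp_neg_mul_sq hc2 3
  have J0 := (integrable_finsetSum _ I0).const_mul (w * (p ^ 2 + (1 - p) ^ 2) / 6)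
  have J1 := (I1.const_mul (1 - p + w / 2)).add (I2.const_mul (w / 8))
  have J2 := I3.const_mul (1 / 30)
  refine ⟨(J0.add J1).add J2, ?_⟩
  have v1 := fun c (hc : (0 : ℝ) < c) => integral_abs_pow_mul_exp_neg_mul_sq hc 0
  have v3 := fun c (hc : (0 : ℝ) < c) => integral_abs_pow_mul_exp_neg_mul_sq hc 1
  norm_num only [Nat.factorial, Nat.cast_one, pow_one, mul_zero, mul_one, zero_add] at v1 v3
  simp only [charFunErrorBound]
  refine (integral_add (J0.add J1) J2).trans ?_
  congr 1
  · refine (integral_add J0 J1).trans ?_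
    congr 1
    · rw [integral_const_mul, integral_finsetSum _ I0]
      congr 1
      refine Finset.sum_congr rfl fun i h => ?_
      rw [v3 _ (hi i h)]
    · refine (integral_add (I1.const_mul _) (I2.const_mul _)).trans ?_
      rw [integral_const_mul, integral_const_mul, v3 _ hc1]
      simp only [pow_one, v1 _ hc1]
  · rw [integral_const_mul, v3 _ hc2]

theorem abs_binomial_sub_gaussian_le {p : ℝ} (hp : p ∈ Set.Ioo (0 : ℝ) 1) {m j : ℕ}
    (hm : 2 ≤ m) (hj : j ≤ m) :
    |2 * Real.pi * (m.choose j * p ^ j * (1 - p) ^ (m - j)) -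
        Real.sqrt (2 * Real.pi / ((m + 1) * (p * (1 - p)))) *
          Real.exp (-(((j : ℝ) + 1 - (m + 1) * p) ^ 2 / (2 * ((m + 1) * (p * (1 - p))))))| ≤
      ∫ t, charFunErrorBound p m t := by
  have hp' : p ∈ Set.Icc (0 : ℝ) 1 := Set.Ioo_subset_Icc_self hp
  have hw : 0 < p * (1 - p) := mul_pos hp.1 (by linarith [hp.2])
  have hpi := Real.pi_pos
  have hs : 0 < ((m : ℝ) + 1) * (p * (1 - p)) := by positivity
  set y : ℝ := (j : ℝ) + 1 - (m + 1) * p with hy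
  set u : ℝ → ℂ := fun t => Complex.exp (Complex.I * ((-(y * t) : ℝ) : ℂ))
  set f : ℝ → ℂ := fun t =>
    Complex.exp (Complex.I * (((1 - p) * t : ℝ) : ℂ)) * bernoulliCharFun p t ^ m
  set g : ℝ → ℂ := fun t => (Real.exp (-((m + 1) * (p * (1 - p) / 2) * t ^ 2)) : ℂ)
  have hcu : Continuous u := by fun_prop
  have hcf : Continuous f := by
    have := continuous_bernoulliCharFun p
    fun_prop
  have hf : ∫ t in (-Real.pi)..Real.pi, u t * f t =
      ((2 * Real.pi * (m.choose j * p ^ j * (1 - p) ^ (m - j)) : ℝ) : ℂ) :=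
    integral_bernoulliCharFun_pow p hj
  rw [intervalIntegral.integral_of_le (by linarith), ← integral_indicator measurableSet_Ioc] at hf
  have hG := integral_exp_mul_gaussian hs y
  have hg : ∀ t : ℝ, u t * g t = Complex.exp (Complex.I * ((-(y * t) : ℝ) : ℂ)) *
      (Real.exp (-((m + 1) * (p * (1 - p)) / 2 * t ^ 2)) : ℂ) := by
    intro t
    simp only [u, g]
    congr 4
    ring
  simp_rw [← hg] at hG
  have hi1 : Integrable ((Set.Ioc (-Real.pi) Real.pi).indicator fun t => u t * f t) := by
    rw [integrable_indicator_iff measurableSet_Ioc]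
    exact ((hcu.mul hcf).integrableOn_Icc).mono_set Set.Ioc_subset_Icc_self
  have hi2 : Integrable fun t => u t * g t := by
    have h0 : Integrable g := by
      have := integrable_abs_pow_mul_exp_neg_mul_sq
        (c := (m + 1) * (p * (1 - p) / 2)) (by positivity) 0
      simp only [pow_zero, one_mul] at this
      exact this.ofReal
    refine h0.norm.mono' ((hcu.aestronglyMeasurable).mul h0.aestronglyMeasurable)
      (.of_forall fun t => ?_)
    rw [norm_mul, Complex.norm_exp_I_mul_ofReal, one_mul]
  have hkey := integral_sub hi1 hi2
  rw [hG, hf, ← Complex.ofReal_sub] at hkey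
  rw [← Real.norm_eq_abs, ← Complex.norm_real, ← hkey]
  refine norm_integral_le_of_norm_le (integrable_and_integral_charFunErrorBound hp hm).1
    (.of_forall fun t => ?_)
  refine le_of_eq_of_le ?_ (norm_charFun_sub_gaussian_le (t := t) hp' m)
  have hu : ‖u t‖ = 1 := Complex.norm_exp_I_mul_ofReal _
  have hn : ∀ z : ℂ, ‖z‖ = ‖u t * z‖ := fun z => by rw [norm_mul, hu, one_mul]
  change _ = ‖(Set.Ioc (-Real.pi) Real.pi).indicator f t - g t‖
  rw [hn (_ - g t), mul_sub]
  by_cases ht : t ∈ Set.Ioc (-Real.pi) Real.pi <;> simp [ht]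

theorem sum_range_one_div_sq_le {a d : ℝ} (ha : 0 < a) (hd : 0 ≤ d) (M : ℕ) :
    ∑ i ∈ Finset.range M, 1 / (a + d / 2 + d * i) ^ 2 ≤ M / (a * (a + d * M)) := by
  induction M with
  | zero => simp
  | succ M ih =>
    rw [Finset.sum_range_succ]
    have hb : 0 < a + d * M := by positivity
    have h1 : ((M + 1 : ℕ) : ℝ) / (a * (a + d * (M + 1 : ℕ))) - M / (a * (a + d * M)) =
        1 / ((a + d * M) * (a + d * M + d)) := by
      push_cast
      have : a + d * (M + 1) ≠ 0 := by positivity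
      have : a + d * M + d ≠ 0 := by positivity
      field_simp
      ring
    have h2 : 1 / (a + d / 2 + d * M) ^ 2 ≤ 1 / ((a + d * M) * (a + d * M + d)) := by
      apply one_div_le_one_div_of_le (by positivity)
      nlinarith [sq_nonneg d]
    linarith

theorem cube_mul_one_sub_le (p : ℝ) : p ^ 3 * (1 - p) ≤ 27 / 256 := by
  nlinarith [mul_nonneg (sq_nonneg (p - 3 / 4)) (by nlinarith [sq_nonneg (p + 1 / 4)] :
    0 ≤ p ^ 2 + p / 2 + 3 / 16)]

theorem sum_range_one_div_interpolation_sq_le {w : ℝ} (hw : 0 < w) {m : ℕ} (hm : 2 ≤ m) :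
    ∑ i ∈ Finset.range m, 1 / (i * (w / 5) + ((m - 1 - i : ℕ) : ℝ) * (w / 2)) ^ 2 ≤
      4 / w ^ 2 * (m / ((2 / 5 * m - 7 / 10) * (m - 7 / 10))) := by
  have hm' : (2 : ℝ) ≤ m := by exact_mod_cast hm
  have h := sum_range_one_div_sq_le (a := 2 / 5 * m - 7 / 10) (d := 3 / 5) (by linarith)
    (by norm_num) m
  have h2 : (2 / 5 * m - 7 / 10 + 3 / 5 * m : ℝ) = m - 7 / 10 := by ring
  rw [h2] at h
  refine le_trans (le_of_eq ?_) (mul_le_mul_of_nonneg_left h (by positivity))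
  rw [← Finset.sum_range_reflect, Finset.mul_sum]
  refine Finset.sum_congr rfl fun i hi => ?_
  rw [Finset.mem_range] at hi
  have h3 : m - 1 - (m - 1 - i) = i := by omega
  have h4 : ((m - 1 - i : ℕ) : ℝ) = m - 1 - i := by
    rw [Nat.sub_sub, Nat.cast_sub (by omega)]
    push_cast
    ring
  rw [h3, h4, div_mul_div_comm, mul_one,
    show (2 / 5 * (m : ℝ) - 7 / 10 + 3 / 5 / 2 + 3 / 5 * i) =
      2 / w * ((m - 1 - i) * (w / 5) + i * (w / 2)) by field_simp; ring]
  rw [mul_pow, div_pow, ← mul_assoc, mul_div_cancel₀ _ (by positivity)]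
  rw [← div_div]
  norm_num

theorem error_polynomial_le {p : ℝ} (hp0 : 0 ≤ p) (hp1 : p ≤ 1) :
    p * ((p ^ 2 + (1 - p) ^ 2) * (4.2334 / 3) +
      8 / 7 * (1 - p + p * (1 - p) / 2 + 1 / 28 + p ^ 2 / 10)) ≤ 1.621 := by
  nlinarith [mul_nonneg (sub_nonneg.2 hp1) (sq_nonneg (p - 0.2176)), sq_nonneg p,
    mul_nonneg hp0 (sub_nonneg.2 hp1)]

theorem error_polynomial_le' {p : ℝ} (hp0 : 0 ≤ p) (hp1 : p ≤ 0.89) :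
    p * ((p ^ 2 + (1 - p) ^ 2) * (5.367 / 3) +
      6 / 5 * (1 - p + p * (1 - p) / 2 + 1 / 20 + p ^ 2 / 10)) ≤ 1.621 := by
  nlinarith [mul_nonneg (sub_nonneg.2 hp1) (sq_nonneg (p - 0.2294)), sq_nonneg p,
    mul_nonneg hp0 (sub_nonneg.2 hp1)]

theorem error_coefficient_le {m : ℝ} (hm : 7 ≤ m) :
    (m + 1) * (m / ((2 / 5 * m - 7 / 10) * (m - 7 / 10))) ≤ 4.2334 := by
  have h : 0 < (2 / 5 * m - 7 / 10) * (m - 7 / 10) := mul_pos (by linarith) (by linarith)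
  rw [← mul_div_assoc, div_le_iff₀ h]
  nlinarith

theorem error_total_le {p : ℝ} (hp : p ∈ Set.Ioo (0 : ℝ) 1) {m : ℕ} (hm : 1 ≤ m)
    (h : 0.669 * m < (m + 1) ^ 2 * (p ^ 3 * (1 - p))) :
    2 ≤ m ∧ p * ((p ^ 2 + (1 - p) ^ 2) *
      ((m + 1) * (m / ((2 / 5 * m - 7 / 10) * (m - 7 / 10))) / 3) +
      (m + 1) / m * (1 - p + p * (1 - p) / 2 + 1 / (4 * m) + p ^ 2 / 10)) ≤ 1.621 := by
  obtain ⟨hp0, hp1⟩ := hp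
  have hm5 : 5 ≤ m := by
    by_contra! hlt
    have hc := cube_mul_one_sub_le p
    interval_cases m <;> norm_num at h <;> linarith
  refine ⟨by omega, ?_⟩
  have hmR : (5 : ℝ) ≤ m := by exact_mod_cast hm5
  have hq : 0 < 1 - p := by linarith
  by_cases hm7 : 7 ≤ m
  · have hmR7 : (7 : ℝ) ≤ m := by exact_mod_cast hm7
    refine le_trans ?_ (error_polynomial_le hp0.le hp1.le)
    have h1 := error_coefficient_le hmR7
    have h2 : ((m : ℝ) + 1) / m ≤ 8 / 7 := by
      rw [div_le_div_iff₀ (by linarith) (by norm_num)]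
      linarith
    have h3 : 1 / (4 * (m : ℝ)) ≤ 1 / 28 := one_div_le_one_div_of_le (by norm_num) (by linarith)
    gcongr
  · have hp89 : p ≤ 0.89 := by
      by_contra! hlt
      have hc : p ^ 3 * (1 - p) ≤ 0.078 := by
        nlinarith [mul_pos hp0 hq, mul_nonneg (sub_nonneg.2 hlt.le) (sq_nonneg p),
          mul_nonneg (sub_nonneg.2 hlt.le) hp0.le]
      interval_cases m <;> norm_num at h <;> linarith
    refine le_trans ?_ (error_polynomial_le' hp0.le hp89)
    have h1 : ((m : ℝ) + 1) * (m / ((2 / 5 * m - 7 / 10) * (m - 7 / 10))) ≤ 5.367 := by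
      interval_cases m <;> norm_num
    have h2 : ((m : ℝ) + 1) / m ≤ 6 / 5 := by
      rw [div_le_div_iff₀ (by linarith) (by norm_num)]
      linarith
    have h3 : 1 / (4 * (m : ℝ)) ≤ 1 / 20 := one_div_le_one_div_of_le (by norm_num) (by linarith)
    gcongr

theorem integral_charFunErrorBound_le {p : ℝ} (hp : p ∈ Set.Ioo (0 : ℝ) 1) {m : ℕ} (hm : 1 ≤ m)
    (h : 0.669 * m < (m + 1) ^ 2 * (p ^ 3 * (1 - p))) :
    2 ≤ m ∧ (m + 1) * (p * (1 - p)) / (2 * Real.pi) * ∫ t, charFunErrorBound p m t ≤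
      0.516 / p := by
  obtain ⟨hm2, htot⟩ := error_total_le hp hm h
  refine ⟨hm2, ?_⟩
  have hp0 := hp.1
  have hq : 0 < 1 - p := by linarith [hp.2]
  have hw : 0 < p * (1 - p) := mul_pos hp0 hq
  have hmR : (1 : ℝ) ≤ m := by exact_mod_cast hm
  have hm0 : (0 : ℝ) < m := by linarith
  have hpi := Real.pi_gt_d4
  rw [(integrable_and_integral_charFunErrorBound hp hm2).2]
  have hsum := sum_range_one_div_interpolation_sq_le hw hm2
  set S := ∑ i ∈ Finset.range m, 1 / (i * (p * (1 - p) / 5) +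
    ((m - 1 - i : ℕ) : ℝ) * (p * (1 - p) / 2)) ^ 2
  set R := (m : ℝ) / ((2 / 5 * m - 7 / 10) * (m - 7 / 10))
  have htail : 1 / (15 * ((m + 1) * (p * (1 - p)))) ≤ (m + 1) / m * (p ^ 2 / 10) := by
    rw [div_mul_div_comm, div_le_div_iff₀ (by positivity) (by positivity)]
    nlinarith [h]
  have hmain : (m + 1) * (p * (1 - p)) / (2 * Real.pi) *
      (p * (1 - p) * (p ^ 2 + (1 - p) ^ 2) / 6 * S +
      ((1 - p + p * (1 - p) / 2) * (1 / (m * (p * (1 - p) / 2))) +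
      p * (1 - p) / 8 * (1 / (m * (p * (1 - p) / 2)) ^ 2)) +
      1 / 30 * (1 / ((m + 1) * (p * (1 - p) / 2)) ^ 2)) ≤
      (m + 1) * (p * (1 - p)) / (2 * Real.pi) *
      (p * (1 - p) * (p ^ 2 + (1 - p) ^ 2) / 6 * (4 / (p * (1 - p)) ^ 2 * R) +
      ((1 - p + p * (1 - p) / 2) * (1 / (m * (p * (1 - p) / 2))) +
      p * (1 - p) / 8 * (1 / (m * (p * (1 - p) / 2)) ^ 2)) +
      1 / 30 * (1 / ((m + 1) * (p * (1 - p) / 2)) ^ 2)) := by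
    gcongr
  refine hmain.trans ?_
  have heq : (m + 1) * (p * (1 - p)) / (2 * Real.pi) *
      (p * (1 - p) * (p ^ 2 + (1 - p) ^ 2) / 6 * (4 / (p * (1 - p)) ^ 2 * R) +
      ((1 - p + p * (1 - p) / 2) * (1 / (m * (p * (1 - p) / 2))) +
      p * (1 - p) / 8 * (1 / (m * (p * (1 - p) / 2)) ^ 2)) +
      1 / 30 * (1 / ((m + 1) * (p * (1 - p) / 2)) ^ 2)) =
      1 / Real.pi * ((p ^ 2 + (1 - p) ^ 2) * ((m + 1) * R / 3) +
        (m + 1) / m * (1 - p + p * (1 - p) / 2 + 1 / (4 * m)) +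
        1 / (15 * ((m + 1) * (p * (1 - p))))) := by
    have h1 : 1 - p ≠ 0 := hq.ne'
    have h2 : (m : ℝ) + 1 ≠ 0 := by positivity
    have h3 : p ≠ 0 := hp0.ne'
    field_simp
    ring
  rw [heq, one_div_mul_eq_div, div_le_div_iff₀ (by linarith) hp0]
  nlinarith [mul_le_mul_of_nonneg_left htail hp0.le]

theorem mul_sqrt_le_of_sq_le {a b c : ℝ} (hb : 0 ≤ b) (hc : 0 ≤ c) (h : a ^ 2 * b ≤ c ^ 2) :
    a * Real.sqrt b ≤ c := by
  refine le_of_sq_le_sq ?_ hc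
  rwa [mul_pow, Real.sq_sqrt hb]

theorem abs_binomial_sub_gaussian_scaled_le {p : ℝ} (hp : p ∈ Set.Ioo (0 : ℝ) 1) {m j : ℕ}
    (hj : j ≤ m) :
    |(m + 1) * (p * (1 - p)) * (m.choose j * p ^ j * (1 - p) ^ (m - j)) -
        (m + 1) * (p * (1 - p)) / (2 * Real.pi) *
          (Real.sqrt (2 * Real.pi / ((m + 1) * (p * (1 - p)))) *
          Real.exp (-(((j : ℝ) + 1 - (m + 1) * p) ^ 2 / (2 * ((m + 1) * (p * (1 - p)))))))| ≤
      0.516 / p := by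
  have hp0 := hp.1
  have hp1 := hp.2
  have hq : 0 < 1 - p := by linarith
  have hw : 0 < p * (1 - p) := mul_pos hp0 hq
  have hpi := Real.pi_gt_d4
  have hs : 0 < ((m : ℝ) + 1) * (p * (1 - p)) := by positivity
  set s := ((m : ℝ) + 1) * (p * (1 - p))
  set b := m.choose j * p ^ j * (1 - p) ^ (m - j)
  set e := Real.exp (-(((j : ℝ) + 1 - (m + 1) * p) ^ 2 / (2 * s)))
  have hb : 0 ≤ b := by positivity
  have he : e ≤ 1 := Real.exp_le_one_iff.2 (neg_nonpos.2 (by positivity))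
  rcases lt_or_ge (0.669 * (m : ℝ)) ((m + 1) ^ 2 * (p ^ 3 * (1 - p))) with h | h
  · rcases Nat.eq_zero_or_pos m with hm | hm
    swap
    · obtain ⟨hm2, hint⟩ := integral_charFunErrorBound_le hp hm h
      have hmain := abs_binomial_sub_gaussian_le hp hm2 hj
      have hsp : s = s / (2 * Real.pi) * (2 * Real.pi) := by field_simp
      have hfac : s * b - s / (2 * Real.pi) * (Real.sqrt (2 * Real.pi / s) * e) =
          s / (2 * Real.pi) * (2 * Real.pi * b - Real.sqrt (2 * Real.pi / s) * e) := by
        linear_combination b * hsp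
      rw [hfac, abs_mul, abs_of_nonneg (by positivity)]
      exact (mul_le_mul_of_nonneg_left hmain (by positivity)).trans hint
    · subst hm
      have hj0 : j = 0 := by omega
      have hb1 : b = 1 := by simp [b, hj0]
      have hs1 : s ≤ 1 / 4 := by
        simp only [s]
        push_cast
        nlinarith [sq_nonneg (p - 1 / 2)]
      have hc : 0.516 ≤ 0.516 / p := by
        rw [le_div_iff₀ hp0]
        linarith
      have hg : s / (2 * Real.pi) * Real.sqrt (2 * Real.pi / s) ≤ 0.516 := by
        refine mul_sqrt_le_of_sq_le (by positivity) (by norm_num) ?_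
        have : (s / (2 * Real.pi)) ^ 2 * (2 * Real.pi / s) = s / (2 * Real.pi) := by field_simp
        rw [this, div_le_iff₀ (by positivity)]
        nlinarith
      have hg0 : 0 ≤ s / (2 * Real.pi) * Real.sqrt (2 * Real.pi / s) := by positivity
      rw [← mul_assoc (s / (2 * Real.pi))]
      refine abs_sub_le_of_nonneg_of_le (by positivity) ?_ (by positivity) ?_
      · rw [hb1]
        linarith
      · exact (mul_le_of_le_one_right hg0 he).trans (hg.trans hc)
  · have hm : 1 ≤ m := by
      by_contra! hm
      have h0 : m = 0 := by omega
      subst h0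
      have : 0 < p ^ 3 * (1 - p) := by positivity
      norm_num at h
      linarith
    have hmR : (1 : ℝ) ≤ m := by exact_mod_cast hm
    have hc : 0 ≤ 0.516 / p := by positivity
    have hg : s / (2 * Real.pi) * Real.sqrt (2 * Real.pi / s) ≤ 0.516 / p := by
      refine mul_sqrt_le_of_sq_le (by positivity) hc ?_
      have : (s / (2 * Real.pi)) ^ 2 * (2 * Real.pi / s) = s / (2 * Real.pi) := by field_simp
      rw [this, div_pow, div_le_div_iff₀ (by positivity) (by positivity)]
      have h1 : s * p ^ 2 * (m + 1) ≤ 0.669 * (m + 1) := by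
        simp only [s]
        nlinarith
      have h2 : s * p ^ 2 ≤ 0.669 := le_of_mul_le_mul_right h1 (by positivity)
      nlinarith
    have hg0 : 0 ≤ s / (2 * Real.pi) * Real.sqrt (2 * Real.pi / s) := by positivity
    rw [← mul_assoc (s / (2 * Real.pi))]
    refine abs_sub_le_of_nonneg_of_le (by positivity) ?_ (by positivity)
      ((mul_le_of_le_one_right hg0 he).trans hg)
    have h1 := mul_le_mul_of_nonneg_left (two_pi_mul_binomial_le hp hm hj)
      (by positivity : 0 ≤ s / (2 * Real.pi))
    have h2 : s * b = s / (2 * Real.pi) * (2 * Real.pi * b) := by field_simp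
    rw [h2]
    refine h1.trans (mul_sqrt_le_of_sq_le (by positivity) hc ?_)
    have h3 : (s / (2 * Real.pi)) ^ 2 * (Real.pi / (m * (p * (1 - p) / 5))) =
        5 * ((m + 1) ^ 2 * (p ^ 3 * (1 - p))) / (4 * Real.pi * m * p ^ 2) := by
      simp only [s]
      have : 1 - p ≠ 0 := hq.ne'
      field_simp
      ring
    rw [h3, div_pow, div_le_div_iff₀ (by positivity) (by positivity)]
    have h4 : 5 * ((m + 1) ^ 2 * (p ^ 3 * (1 - p))) ≤ 0.516 ^ 2 * (4 * Real.pi * m) := by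
      nlinarith
    nlinarith [mul_le_mul_of_nonneg_right h4 (sq_nonneg p)]

theorem hasDerivAt_Phi (x : ℝ) :
    HasDerivAt Phi ((Real.sqrt (2 * Real.pi))⁻¹ * Real.exp (-x ^ 2 / 2)) x := by
  have hI : Integrable fun t : ℝ => Real.exp (-t ^ 2 / 2) := by
    refine (integrable_exp_neg_mul_sq (b := 1 / 2) (by norm_num)).congr (.of_forall fun t => ?_)
    simp only
    congr 1
    ring
  have hc : Continuous fun t : ℝ => Real.exp (-t ^ 2 / 2) := by fun_prop
  have hPhi : Phi = fun x => (Real.sqrt (2 * Real.pi))⁻¹ *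
      ((∫ t in (0 : ℝ)..x, Real.exp (-t ^ 2 / 2)) + ∫ t in Set.Iic 0, Real.exp (-t ^ 2 / 2)) := by
    ext x
    rw [Phi, ← integral_Iic_eq_integral_Iio,
      ← intervalIntegral.integral_Iic_sub_Iic hI.integrableOn hI.integrableOn, sub_add_cancel]
  rw [hPhi]
  exact ((hc.integral_hasStrictDerivAt 0 x).hasDerivAt.add_const _).const_mul _

theorem hasDerivAt_binomial_sum {n k : ℕ} (hk : k + 1 ≤ n) (p : ℝ) :
    HasDerivAt (fun s : ℝ =>
        ∑ i ∈ Finset.range (k + 1), (n.choose i : ℝ) * s ^ i * (1 - s) ^ (n - i))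
      (-(n * ((n - 1).choose k * p ^ k * (1 - p) ^ (n - 1 - k)))) p := by
  have hterm : ∀ i : ℕ, HasDerivAt (fun s : ℝ => (n.choose i : ℝ) * s ^ i * (1 - s) ^ (n - i))
      (n.choose i * (i * p ^ (i - 1)) * (1 - p) ^ (n - i) +
        n.choose i * p ^ i * (((n - i : ℕ) : ℝ) * (1 - p) ^ (n - i - 1) * (-1))) p := by
    intro i
    exact ((hasDerivAt_pow i p).const_mul (n.choose i : ℝ)).mul
      (((hasDerivAt_id p).const_sub 1).pow (n - i))
  induction k with
  | zero =>
    simp only [zero_add, Finset.sum_range_one]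
    refine (hterm 0).congr_deriv ?_
    simp
  | succ k ih =>
    simp only [Finset.sum_range_succ _ (k + 1)]
    refine ((ih (by omega)).add (hterm (k + 1))).congr_deriv ?_
    obtain ⟨m, rfl⟩ : ∃ m, n = m + 1 := ⟨n - 1, by omega⟩
    have h1 : ((m + 1).choose (k + 1) : ℝ) * (k + 1) = (m + 1) * m.choose k := by
      exact_mod_cast (Nat.add_one_mul_choose_eq m k).symm
    have h2 : ((m + 1).choose (k + 1) : ℝ) * ((m + 1 - (k + 1) : ℕ) : ℝ) =
        (m + 1) * m.choose (k + 1) := by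
      have := Nat.choose_mul_succ_eq m (k + 1)
      rw [mul_comm (m + 1 : ℝ)]
      exact_mod_cast this.symm
    have e1 : m + 1 - 1 = m := rfl
    have e2 : m + 1 - (k + 1) - 1 = m - (k + 1) := by omega
    have e3 : m + 1 - (k + 1) = m - k := by omega
    rw [e1, e2]
    rw [e3] at h2 ⊢
    push_cast
    linear_combination (p ^ k * (1 - p) ^ (m - k)) * h1 -
      (p ^ (k + 1) * (1 - p) ^ (m - (k + 1))) * h2

theorem hasDerivAt_standardization {n p : ℝ} (k : ℝ) (hs : 0 < n * p * (1 - p)) :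
    HasDerivAt (fun s : ℝ => (k - n * s) / Real.sqrt (n * s * (1 - s)))
      (-(n / Real.sqrt (n * p * (1 - p)) * (1 + (k - n * p) / Real.sqrt (n * p * (1 - p)) *
        (1 - 2 * p) / (2 * Real.sqrt (n * p * (1 - p)))))) p := by
  have h1 : HasDerivAt (fun s : ℝ => k - n * s) (-n) p := by
    simpa using ((hasDerivAt_id p).const_mul n).const_sub k
  have h2 : HasDerivAt (fun s : ℝ => n * s * (1 - s)) (n * (1 - 2 * p)) p := by
    refine (((hasDerivAt_id p).const_mul n).mul ((hasDerivAt_id p).const_sub 1)).congr_deriv ?_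
    simp only [id]
    ring
  have hr := Real.sqrt_pos.2 hs
  refine (h1.div (h2.sqrt hs.ne') hr.ne').congr_deriv ?_
  have hsq := Real.sq_sqrt hs.le
  set r := Real.sqrt (n * p * (1 - p))
  field_simp
  ring

theorem abs_mul_exp_neg_sq_div_two_le (x : ℝ) :
    |x| * ((Real.sqrt (2 * Real.pi))⁻¹ * Real.exp (-x ^ 2 / 2)) ≤ 0.242 := by
  have hpi := Real.pi_gt_d4
  have he := Real.exp_one_gt_d9
  refine le_of_sq_le_sq ?_ (by norm_num)
  rw [mul_pow, mul_pow, inv_pow, Real.sq_sqrt (by positivity), sq_abs, ← Real.exp_nat_mul]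
  have h1 : x ^ 2 * Real.exp ((2 : ℕ) * (-x ^ 2 / 2)) ≤ (Real.exp 1)⁻¹ := by
    have h2 := mul_le_mul_of_nonneg_right (Real.add_one_le_exp (x ^ 2 - 1))
      (Real.exp_pos (-x ^ 2)).le
    rw [← Real.exp_add] at h2
    rw [← Real.exp_neg]
    have e1 : ((2 : ℕ) : ℝ) * (-x ^ 2 / 2) = -x ^ 2 := by
      push_cast
      ring
    have e2 : x ^ 2 - 1 + -x ^ 2 = -1 := by ring
    rw [sub_add_cancel, e2] at h2
    rwa [e1]
  have h3 : (2 * Real.pi)⁻¹ * (Real.exp 1)⁻¹ ≤ 0.242 ^ 2 := by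
    rw [← mul_inv]
    refine inv_le_of_inv_le₀ (by norm_num) ?_
    norm_num
    nlinarith
  refine le_trans ?_ h3
  have := mul_le_mul_of_nonneg_left h1 (by positivity : 0 ≤ (2 * Real.pi)⁻¹)
  linarith

theorem sqrt_mul_gaussian_eq {s : ℝ} (hs : 0 < s) (y : ℝ) :
    Real.sqrt s * ((Real.sqrt (2 * Real.pi))⁻¹ * Real.exp (-(y / Real.sqrt s) ^ 2 / 2)) =
      s / (2 * Real.pi) *
        (Real.sqrt (2 * Real.pi / s) * Real.exp (-(y ^ 2 / (2 * s)))) := by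
  have h1 : Real.sqrt s * (Real.sqrt (2 * Real.pi))⁻¹ =
      s / (2 * Real.pi) * Real.sqrt (2 * Real.pi / s) := by
    have hr := Real.sqrt_pos.2 hs
    have hc : 0 < Real.sqrt (2 * Real.pi) := by positivity
    rw [Real.sqrt_div (by positivity), ← div_eq_mul_inv]
    nth_rewrite 2 [← Real.sq_sqrt hs.le]
    nth_rewrite 2 [← Real.sq_sqrt (by positivity : 0 ≤ 2 * Real.pi)]
    field_simp
  have h2 : -(y / Real.sqrt s) ^ 2 / 2 = -(y ^ 2 / (2 * s)) := by
    rw [div_pow, Real.sq_sqrt hs.le]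
    field_simp
  rw [h2, ← mul_assoc, h1, mul_assoc]

theorem gaussian_scaled_le_of_zero {n p : ℝ} (hn : 0 < n) (hp : p ∈ Set.Ioo (0 : ℝ) 1) :
    Real.sqrt (n * p * (1 - p)) * ((Real.sqrt (2 * Real.pi))⁻¹ *
      Real.exp (-((0 - n * p) / Real.sqrt (n * p * (1 - p))) ^ 2 / 2)) ≤ 0.516 / p := by
  have hp0 := hp.1
  have hq : 0 < 1 - p := by linarith [hp.2]
  have hs : 0 < n * p * (1 - p) := by positivity
  have h := abs_mul_exp_neg_sq_div_two_le ((0 - n * p) / Real.sqrt (n * p * (1 - p)))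
  have hr := Real.sqrt_pos.2 hs
  have hsq := Real.sq_sqrt hs.le
  set r := Real.sqrt (n * p * (1 - p))
  have h1 : r ≤ |(0 - n * p) / r| := by
    rw [zero_sub, abs_div, abs_neg, abs_of_pos (by positivity : 0 < n * p), abs_of_pos hr,
      le_div_iff₀ hr]
    nlinarith [mul_pos (mul_pos hn hp0) hp0]
  refine (mul_le_mul_of_nonneg_right h1 (by positivity)).trans (h.trans ?_)
  rw [le_div_iff₀ hp0]
  nlinarith [hp.2]

/-- For `n ≥ 1`, `0 ≤ k ≤ n`, `0 < p < 1`, `q = 1 − p`: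
`|∂/∂p F_{n,p}(k) − ∂/∂p G_{n,p}(k)| ≤ (1/(pq))(c₁/p + c₂)` with
`c₁ = 0.516`, `c₂ = 0.121`, where `F_{n,p}(k) = Σ_{i=0}^{k−1} C(n,i) p^i q^{n−i}`
and `G_{n,p}(k) = Φ((k − np)/√(npq))` are viewed as functions of `p`. -/
theorem deriv_F_minus_deriv_G_bound_left (n k : ℕ) (hn : 1 ≤ n) (hk : k ≤ n)
    (p : ℝ) (hp : p ∈ Set.Ioo (0 : ℝ) 1) :
    |deriv (fun s : ℝ =>
        ∑ i ∈ Finset.range k, (n.choose i : ℝ) * s ^ i * (1 - s) ^ (n - i)) p -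
      deriv (fun s : ℝ =>
        Phi (((k : ℝ) - n * s) / Real.sqrt (n * s * (1 - s)))) p| ≤
      (1 / (p * (1 - p))) * (0.516 / p + 0.121) := by
  have hp0 := hp.1
  have hq : 0 < 1 - p := by linarith [hp.2]
  have hnR : (0 : ℝ) < n := by exact_mod_cast hn
  have hs : 0 < n * p * (1 - p) := by positivity
  have hG := ((hasDerivAt_Phi (((k : ℝ) - n * p) / Real.sqrt (n * p * (1 - p)))).comp p
    (hasDerivAt_standardization (k : ℝ) hs)).deriv
  rw [Function.comp_def] at hG
  have hr := Real.sqrt_pos.2 hs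
  have hsq := Real.sq_sqrt hs.le
  have hx := abs_mul_exp_neg_sq_div_two_le (((k : ℝ) - n * p) / Real.sqrt (n * p * (1 - p)))
  obtain ⟨D, hD, hDle⟩ : ∃ D, deriv (fun s : ℝ =>
      ∑ i ∈ Finset.range k, (n.choose i : ℝ) * s ^ i * (1 - s) ^ (n - i)) p = -(n * D) ∧
      |n * p * (1 - p) * D - Real.sqrt (n * p * (1 - p)) * ((Real.sqrt (2 * Real.pi))⁻¹ *
        Real.exp (-(((k : ℝ) - n * p) / Real.sqrt (n * p * (1 - p))) ^ 2 / 2))| ≤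
          0.516 / p := by
    rcases k with _ | j
    · refine ⟨0, by simp, ?_⟩
      have h := gaussian_scaled_le_of_zero hnR hp
      rw [mul_zero, zero_sub, abs_neg, abs_of_nonneg (by positivity)]
      simpa using h
    · refine ⟨_, (hasDerivAt_binomial_sum hk p).deriv, ?_⟩
      obtain ⟨m, rfl⟩ : ∃ m, n = m + 1 := ⟨n - 1, by omega⟩
      have h := abs_binomial_sub_gaussian_scaled_le hp (m := m) (j := j) (by omega)
      have hcast : ((m + 1 : ℕ) : ℝ) * p * (1 - p) = (m + 1) * (p * (1 - p)) := by
        push_cast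
        ring
      rw [hcast] at hs ⊢
      rw [sqrt_mul_gaussian_eq hs, Nat.add_sub_cancel]
      push_cast
      exact h
  rw [hD, hG]
  set r := Real.sqrt (n * p * (1 - p))
  set x := ((k : ℝ) - n * p) / r
  set f := (Real.sqrt (2 * Real.pi))⁻¹ * Real.exp (-x ^ 2 / 2)
  have heq : -(n * D) - f * -(n / r * (1 + x * (1 - 2 * p) / (2 * r))) =
      1 / (p * (1 - p)) * (-(n * p * (1 - p) * D - r * f) + x * f * (1 - 2 * p) / 2) := by
    have h1 : 1 - p ≠ 0 := hq.ne'
    have hn' : (n : ℝ) = r ^ 2 / (p * (1 - p)) := by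
      rw [hsq]
      field_simp
    rw [hn']
    field_simp
    ring
  rw [heq, abs_mul, abs_of_pos (by positivity : 0 < 1 / (p * (1 - p)))]
  refine mul_le_mul_of_nonneg_left ((abs_add_le _ _).trans ?_) (by positivity)
  rw [abs_neg]
  refine add_le_add hDle ?_
  have hf : 0 ≤ f := by positivity
  have h12 : |1 - 2 * p| ≤ 1 := abs_le.2 ⟨by linarith [hp.2], by linarith⟩
  rw [abs_div, abs_mul, abs_mul, abs_of_nonneg hf, abs_two]
  have := mul_le_mul hx h12 (abs_nonneg _) (by norm_num)
  linarith
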